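/- Let t ≥ 3 be an integer and let M be a matroid admitting a cyclic (t−1,t)-ordering e_1, e_2, …, e_n with n ≥ 4t−6. Then: (i) there is no index i for which there exist t-element circuits C and C' of M with X_i ⊆ C, X_{i+2t−4} ⊆ C', C ⊄ σ[i, i+3t−6] and C' ⊄ σ[i, i+3t−6]; and (ii) there is no index i for which there exist t-element cocircuits C* and C*' of M with X_i ⊆ C*, X_{i+2t−4} ⊆ C*', C* ⊄ σ[i, i+3t−6] and C*' ⊄ σ[i, i+3t−6]. -/

import Mathlib

open Set

namespace CyclicArr

variable {α : Type*}

/-- `C` is a circuit of the matroid `M`: a minimal dependent set. -/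
def Cct (M : Matroid α) (C : Set α) : Prop := Minimal M.Dep C

/-- The set of `len` consecutive elements `{e_i, e_{i+1}, …, e_{i+len-1}}`
in a cyclic ordering `e`, subscripts mod `n`. -/
def seg {n : ℕ} (e : ZMod n → α) (i : ℤ) (len : ℕ) : Set α :=
  (fun k : ℕ => e ((i + k : ℤ) : ZMod n)) '' Set.Iio len

/-- `e` is a cyclic ordering of (the ground set of) `M`. -/
def CyclicOrd {n : ℕ} (M : Matroid α) (e : ZMod n → α) : Prop :=
  Function.Injective e ∧ Set.range e = M.E

/-- `e` is a cyclic `(t-1, t)`-ordering of `M`: every `t-1` consecutive elements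
are contained in a `t`-element circuit and a `t`-element cocircuit. -/
def CyclicPropOrd {n : ℕ} (M : Matroid α) (t : ℕ) (e : ZMod n → α) : Prop :=
  CyclicOrd M e ∧
  ∀ i : ℤ, (∃ C, Cct M C ∧ C.ncard = t ∧ seg e i (t-1) ⊆ C) ∧
           (∃ C, Cct M✶ C ∧ C.ncard = t ∧ seg e i (t-1) ⊆ C)

/-!
Write `t = k + 2`, so that `X_i`, `X_{i+k}`, `X_{i+2k}` are `(k+1)`-element windows covering
`σ = σ[i, i+3k]`, each consecutive pair overlapping in one element. Suppose `C = X_i ∪ {c}` and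
`C' = X_{i+2k} ∪ {c'}` with `c, c' ∉ σ`. By orthogonality, if a window `X` meets `C` and `C'` in
one element each, then the element completing `X` to a cocircuit lies in `C ∩ C'`, and the only
possible common element of `C` and `C'` is `c = c'`. Taking `X = X_{i+k}` gives `c = c'`. Since
`n ≥ 4k + 2`, some window disjoint from `σ` contains `c`; it meets both circuits exactly in `c`, so
the element completing it to a cocircuit would again be `c`, which it already contains.
-/

section Orthogonality

variable {M : Matroid α} {A A' C X : Set α} {c c' d x x' : α}

lemma mem_of_isCocircuit_insert (hC : M.IsCircuit C) (hD : M.IsCocircuit (insert d X))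
    (hCX : C ∩ X = {x}) : d ∈ C := by
  by_contra hd
  apply hC.inter_isCocircuit_ne_singleton hD (e := x)
  rw [inter_insert_of_notMem hd, hCX]

lemma eq_and_eq_of_isCocircuit_insert (hC : M.IsCircuit (insert c A))
    (hC' : M.IsCircuit (insert c' A')) (hAA' : Disjoint A A') (hc : c ∉ A') (hc' : c' ∉ A)
    (hD : M.IsCocircuit (insert d X)) (hX : insert c A ∩ X = {x})
    (hX' : insert c' A' ∩ X = {x'}) : d = c ∧ d = c' := by
  rcases mem_of_isCocircuit_insert hC hD hX with rfl | hdA <;>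
    rcases mem_of_isCocircuit_insert hC' hD hX' with rfl | hdA'
  · exact ⟨rfl, rfl⟩
  · exact absurd hdA' hc
  · exact absurd hdA hc'
  · exact absurd hdA' (hAA'.notMem_of_mem_left hdA)

end Orthogonality

section Segments

variable {n : ℕ} {e : ZMod n → α} {i j : ℤ} {l m : ℕ}

lemma seg_eq_image_Ico (e : ZMod n → α) (i : ℤ) (m : ℕ) :
    seg e i m = (fun k : ℤ ↦ e k) '' Ico i (i + m) := by
  ext x
  constructor
  · rintro ⟨k, hk, rfl⟩
    exact ⟨i + k, by simpa using hk, rfl⟩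
  · rintro ⟨k, ⟨hik, hki⟩, rfl⟩
    refine ⟨(k - i).toNat, by simp only [mem_Iio]; omega, ?_⟩
    simp only [Int.toNat_of_nonneg (sub_nonneg.2 hik), add_sub_cancel]

lemma seg_subset_seg (hji : j ≤ i) (h : i + l ≤ j + m) : seg e i l ⊆ seg e j m := by
  simpa only [seg_eq_image_Ico] using image_mono (Ico_subset_Ico hji h)

lemma range_eq_seg [NeZero n] (e : ZMod n → α) (i : ℤ) : range e = seg e i n := by
  refine subset_antisymm ?_ (image_subset_iff.2 fun _ _ ↦ mem_range_self _)
  rintro _ ⟨z, rfl⟩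
  exact ⟨(z - i).val, ZMod.val_lt _, by simp⟩

lemma injOn_Ico_of_injective (he : e.Injective) (i : ℤ) :
    InjOn (fun k : ℤ ↦ e k) (Ico i (i + n)) := by
  intro a ha b hb hab
  have hmod : a ≡ b [ZMOD n] := (ZMod.intCast_eq_intCast_iff a b n).1 (he hab)
  have hdvd : (n : ℤ) ∣ a - b := hmod.symm.dvd
  have hlt : |a - b| < n := abs_sub_lt_iff.2 (by grind)
  exact sub_eq_zero.1 (Int.eq_zero_of_abs_lt_dvd hdvd hlt)

lemma ncard_seg (he : e.Injective) (i : ℤ) (hm : m ≤ n) : (seg e i m).ncard = m := by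
  have hinj := (injOn_Ico_of_injective he i).mono
    (Ico_subset_Ico_right (show i + m ≤ i + n by omega))
  rw [seg_eq_image_Ico, hinj.ncard_image, ← Finset.coe_Ico, ncard_coe_finset]
  simp

lemma seg_inter_seg (he : e.Injective) (hij : i ≤ j) (hl : l ≤ n) (hjm : j + m ≤ i + n) :
    seg e i l ∩ seg e j m = (fun k : ℤ ↦ e k) '' Ico j (min (i + l) (j + m)) := by
  have hinj := injOn_Ico_of_injective he i
  rw [seg_eq_image_Ico, seg_eq_image_Ico, ← hinj.image_inter (Ico_subset_Ico_right (by omega))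
    (Ico_subset_Ico hij hjm), Ico_inter_Ico, max_eq_right hij]

lemma seg_inter_seg_eq_singleton (he : e.Injective) (i : ℤ) (hlm : l + m < n) :
    seg e i (l + 1) ∩ seg e (i + l) (m + 1) = {e ((i + l : ℤ) : ZMod n)} := by
  have hIco : Ico (i + l) (min (i + (l + 1 : ℕ)) (i + l + (m + 1 : ℕ))) = {i + (l : ℤ)} := by
    ext k
    simp only [mem_Ico, mem_singleton_iff]
    omega
  rw [seg_inter_seg he (by omega) (by omega) (by omega), hIco, image_singleton]

lemma disjoint_seg_seg (he : e.Injective) (hij : i + l ≤ j) (hjm : j + m ≤ i + n) :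
    Disjoint (seg e i l) (seg e j m) := by
  rw [disjoint_iff_inter_eq_empty, seg_inter_seg he (by omega) (by omega) hjm,
    Ico_eq_empty (by omega), image_empty]

lemma exists_mem_seg_disjoint {x : α} (he : e.Injective) (hx : x ∈ range e)
    (hxl : x ∉ seg e i l) (hm : 0 < m) (hlm : l + m ≤ n) :
    ∃ j, x ∈ seg e j m ∧ Disjoint (seg e i l) (seg e j m) := by
  have : NeZero n := ⟨by omega⟩
  rw [range_eq_seg e i, seg_eq_image_Ico] at hx
  obtain ⟨k, ⟨hik, hkn⟩, rfl⟩ := hx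
  have hlk : i + l ≤ k := by
    by_contra! hkl
    exact hxl (seg_eq_image_Ico e i l ▸ mem_image_of_mem _ ⟨hik, hkl⟩)
  -- Start at `k`, unless this runs past `i + n`, where the segment would wrap around.
  let j := min k (i + n - m)
  refine ⟨j, ?_, disjoint_seg_seg he (by omega) (by omega)⟩
  rw [seg_eq_image_Ico]
  exact mem_image_of_mem _ ⟨by omega, by omega⟩

lemma exists_eq_insert_seg {C : Set α} (he : e.Injective) (hm : m ≤ n)
    (hC : C.ncard = m + 1) (hiC : seg e i m ⊆ C) :
    ∃ c ∉ seg e i m, C = insert c (seg e i m) := by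
  have hfin : (seg e i m).Finite := (finite_Iio m).image _
  obtain ⟨c, hc, rfl⟩ := (exists_eq_insert_iff_ncard hfin).2 ⟨hiC, by rw [ncard_seg he i hm, hC]⟩
  exact ⟨c, hc, rfl⟩

end Segments

section CyclicOrderings

variable {M : Matroid α} {n k : ℕ} {e : ZMod n → α} {i : ℤ} {c c' : α}

lemma CyclicOrd.dual (he : CyclicOrd M e) : CyclicOrd M✶ e := he

lemma eq_of_isCircuit_insert_seg (he : e.Injective) (hk : 0 < k) (hn : 3 * k + 1 ≤ n)
    (hcocircuit : ∃ d, M.IsCocircuit (insert d (seg e (i + k) (k + 1))))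
    (hC : M.IsCircuit (insert c (seg e i (k + 1))))
    (hC' : M.IsCircuit (insert c' (seg e (i + 2 * k) (k + 1))))
    (hc : c ∉ seg e i (3 * k + 1)) (hc' : c' ∉ seg e i (3 * k + 1)) : c = c' := by
  have hleft : seg e i (k + 1) ⊆ seg e i (3 * k + 1) := seg_subset_seg le_rfl (by omega)
  have hmid : seg e (i + k) (k + 1) ⊆ seg e i (3 * k + 1) :=
    seg_subset_seg (by omega) (by omega)
  have hright : seg e (i + 2 * k) (k + 1) ⊆ seg e i (3 * k + 1) :=
    seg_subset_seg (by omega) (by omega)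
  have hmeet := seg_inter_seg_eq_singleton he i (show k + k < n by omega)
  have hmeet' := seg_inter_seg_eq_singleton he (i + k) (show k + k < n by omega)
  rw [add_assoc i, ← two_mul, inter_comm] at hmeet'
  rw [← insert_inter_of_notMem (notMem_subset hmid hc)] at hmeet
  rw [← insert_inter_of_notMem (notMem_subset hmid hc')] at hmeet'
  obtain ⟨d, hD⟩ := hcocircuit
  obtain ⟨rfl, rfl⟩ := eq_and_eq_of_isCocircuit_insert hC hC'
    (disjoint_seg_seg he (by omega) (by omega)) (notMem_subset hright hc)
    (notMem_subset hleft hc') hD hmeet hmeet'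
  rfl

lemma mem_seg_or_mem_seg_of_isCircuit (he : CyclicOrd M e) (hk : 0 < k) (hn : 4 * k + 2 ≤ n)
    (hcocircuit : ∀ j, ∃ d ∉ seg e j (k + 1), M.IsCocircuit (insert d (seg e j (k + 1))))
    (hC : M.IsCircuit (insert c (seg e i (k + 1))))
    (hC' : M.IsCircuit (insert c' (seg e (i + 2 * k) (k + 1)))) :
    c ∈ seg e i (3 * k + 1) ∨ c' ∈ seg e i (3 * k + 1) := by
  by_contra! ⟨hc, hc'⟩
  obtain ⟨hinj, hrange⟩ := he
  have hleft : seg e i (k + 1) ⊆ seg e i (3 * k + 1) := seg_subset_seg le_rfl (by omega)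
  have hright : seg e (i + 2 * k) (k + 1) ⊆ seg e i (3 * k + 1) :=
    seg_subset_seg (by omega) (by omega)
  obtain rfl : c = c' := eq_of_isCircuit_insert_seg hinj hk (by omega)
    ((hcocircuit (i + k)).imp fun _ ↦ And.right) hC hC' hc hc'
  obtain ⟨j, hcj, hdisj⟩ := exists_mem_seg_disjoint hinj
    (hrange ▸ hC.subset_ground (mem_insert c _)) hc k.succ_pos (by omega)
  have hmeet {A : Set α} (hA : A ⊆ seg e i (3 * k + 1)) :
      insert c A ∩ seg e j (k + 1) = {c} := by
    rw [insert_inter_of_mem hcj, (hdisj.mono_left hA).inter_eq, insert_empty_eq]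
  obtain ⟨d, hdj, hD⟩ := hcocircuit j
  obtain ⟨rfl, -⟩ := eq_and_eq_of_isCocircuit_insert hC hC'
    (disjoint_seg_seg hinj (by omega) (by omega)) (notMem_subset hright hc)
    (notMem_subset hleft hc') hD (hmeet hleft) (hmeet hright)
  exact hdj hcj

theorem subset_seg_or_subset_seg_of_cct {t : ℕ} {C C' : Set α} (he : CyclicOrd M e)
    (ht : 3 ≤ t) (hn : 4 * t - 6 ≤ n)
    (hcocircuit : ∀ j, ∃ D, Cct M✶ D ∧ D.ncard = t ∧ seg e j (t - 1) ⊆ D)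
    (hC : Cct M C) (hCt : C.ncard = t) (hiC : seg e i (t - 1) ⊆ C)
    (hC' : Cct M C') (hCt' : C'.ncard = t) (hiC' : seg e (i + 2 * (t : ℤ) - 4) (t - 1) ⊆ C') :
    C ⊆ seg e i (3 * t - 5) ∨ C' ⊆ seg e i (3 * t - 5) := by
  obtain ⟨k, rfl⟩ := Nat.exists_eq_add_of_le' (show 2 ≤ t by omega)
  rw [show k + 2 - 1 = k + 1 by omega] at hcocircuit hiC hiC'
  rw [show i + 2 * ((k + 2 : ℕ) : ℤ) - 4 = i + 2 * k by omega] at hiC'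
  rw [show 3 * (k + 2) - 5 = 3 * k + 1 by omega]
  have hcocircuit_insert (j : ℤ) :
      ∃ d ∉ seg e j (k + 1), M.IsCocircuit (insert d (seg e j (k + 1))) := by
    obtain ⟨D, hD, hDt, hjD⟩ := hcocircuit j
    obtain ⟨d, hd, rfl⟩ := exists_eq_insert_seg he.1 (by omega) hDt hjD
    exact ⟨d, hd, hD⟩
  obtain ⟨c, -, rfl⟩ := exists_eq_insert_seg he.1 (by omega) hCt hiC
  obtain ⟨c', -, rfl⟩ := exists_eq_insert_seg he.1 (by omega) hCt' hiC'
  exact (mem_seg_or_mem_seg_of_isCircuit he (by omega) (by omega) hcocircuit_insert hC hC').imp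
    (insert_subset · (seg_subset_seg le_rfl (by omega)))
    (insert_subset · (seg_subset_seg (by omega) (by omega)))

end CyclicOrderings

/-- With `t ≥ 3` and `n ≥ 4t-6`: (i) there is no index `i` with `t`-element
circuits containing `X_i` and `X_{i+2t-4}` respectively, neither contained in
`σ[i, i+3t-6]`; (ii) likewise for cocircuits. -/
theorem statement_3 (M : Matroid α) (t n : ℕ) (ht : 3 ≤ t) (hn : 4 * t - 6 ≤ n)
    (e : ZMod n → α) (he : CyclicPropOrd M t e) :
    (¬ ∃ i : ℤ, ∃ C C' : Set α,
        Cct M C ∧ C.ncard = t ∧ seg e i (t - 1) ⊆ C ∧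
        Cct M C' ∧ C'.ncard = t ∧ seg e (i + 2 * (t : ℤ) - 4) (t - 1) ⊆ C' ∧
        ¬ C ⊆ seg e i (3 * t - 5) ∧ ¬ C' ⊆ seg e i (3 * t - 5)) ∧
    (¬ ∃ i : ℤ, ∃ C C' : Set α,
        Cct M✶ C ∧ C.ncard = t ∧ seg e i (t - 1) ⊆ C ∧
        Cct M✶ C' ∧ C'.ncard = t ∧ seg e (i + 2 * (t : ℤ) - 4) (t - 1) ⊆ C' ∧
        ¬ C ⊆ seg e i (3 * t - 5) ∧ ¬ C' ⊆ seg e i (3 * t - 5)) := by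
  constructor
  · rintro ⟨i, C, C', hC, hCt, hiC, hC', hCt', hiC', hCσ, hCσ'⟩
    exact (subset_seg_or_subset_seg_of_cct he.1 ht hn (fun j ↦ (he.2 j).2)
      hC hCt hiC hC' hCt' hiC').elim hCσ hCσ'
  · rintro ⟨i, C, C', hC, hCt, hiC, hC', hCt', hiC', hCσ, hCσ'⟩
    have hcircuit (j : ℤ) : ∃ D, Cct M✶✶ D ∧ D.ncard = t ∧ seg e j (t - 1) ⊆ D := by
      simpa only [M.dual_dual] using (he.2 j).1
    exact (subset_seg_or_subset_seg_of_cct he.1.dual ht hn hcircuit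
      hC hCt hiC hC' hCt' hiC').elim hCσ hCσ'

end CyclicArr
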